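/- arXiv:1601.06616 — 5 statements merged into one kernel-verified Lean document; each statement's English description precedes it below -/
import Mathlib

section
/- Let a ∈ ℝ² and let r : ℝ → ℝ² be twice differentiable with r''(t) = r(t) − a for all t ≥ 0. If a = r(0) + r'(0) (i.e., the ankle is placed at the instantaneous capture point), then r(t) = a − r'(0)·exp(−t) for all t ≥ 0; consequently r(t) → a, r'(t) → 0, and r''(t) → 0 as t → ∞, so the robot is captured. -/
theorem const_of_deriv_zero_nonneg {E : Type*} [NormedAddCommGroup E] [NormedSpace ℝ E]
    (f : ℝ → E) (h : ∀ t, 0 ≤ t → HasDerivAt f 0 t) (t : ℝ) (ht : 0 ≤ t) : f t = f 0 :=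
  constant_of_has_deriv_right_zero (a := 0) (b := t)
    (fun x hx => (h x hx.1).continuousAt.continuousWithinAt)
    (fun x hx => (h x hx.1).hasDerivWithinAt) t ⟨ht, le_refl t⟩

/-- If the ankle is placed at the instantaneous capture point
(`a = r 0 + r' 0`), then under the LIPM dynamics `r'' = r - a` on `t ≥ 0`,
`r t = a - exp (-t) • r' 0`; consequently `r → a`, `r' → 0`, `r'' → 0`
as `t → ∞`: the robot is captured. -/
theorem stmt2 (a : EuclideanSpace ℝ (Fin 2)) (r : ℝ → EuclideanSpace ℝ (Fin 2))
    (hr : Differentiable ℝ r) (hr' : Differentiable ℝ (deriv r))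
    (hode : ∀ t, 0 ≤ t → deriv (deriv r) t = r t - a)
    (hcap : a = r 0 + deriv r 0) :
    (∀ t, 0 ≤ t → r t = a - Real.exp (-t) • deriv r 0) ∧
    Filter.Tendsto r Filter.atTop (nhds a) ∧
    Filter.Tendsto (deriv r) Filter.atTop (nhds 0) ∧
    Filter.Tendsto (deriv (deriv r)) Filter.atTop (nhds 0) := by
  have h1 : ∀ t, 0 ≤ t → r t + deriv r t - a = 0 := by
    intro t ht
    have key := const_of_deriv_zero_nonneg
      (fun t => Real.exp (-t) • (r t + deriv r t - a)) (by
        intro s hs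
        have e : HasDerivAt (fun t : ℝ => Real.exp (-t)) (Real.exp (-s) * (-1)) s :=
          (hasDerivAt_neg s).exp
        have d := e.smul ((((hr s).hasDerivAt).add ((hr' s).hasDerivAt)).sub_const a)
        refine d.congr_deriv ?_
        rw [hode s hs]
        simp only [Pi.add_apply]
        module) t ht
    have h0 : r 0 + deriv r 0 - a = 0 := by rw [hcap]; simp
    simp only [h0, smul_zero] at key
    exact (smul_eq_zero.mp key).resolve_left (Real.exp_ne_zero _)
  have h2 : ∀ t, 0 ≤ t → r t = a - Real.exp (-t) • deriv r 0 := by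
    intro t ht
    have key := const_of_deriv_zero_nonneg
      (fun t => Real.exp t • (r t - a)) (by
        intro s hs
        have d := (Real.hasDerivAt_exp s).smul (((hr s).hasDerivAt).sub_const a)
        refine d.congr_deriv ?_
        have : deriv r s = a - r s := by
          rw [← sub_eq_zero, ← h1 s hs]; abel
        rw [this]
        module) t ht
    have h0 : r 0 - a = - deriv r 0 := by
      have := h1 0 le_rfl
      rw [← sub_eq_zero, ← this]; abel
    simp only [h0, Real.exp_zero, one_smul] at key
    have k2 : r t - a = Real.exp (-t) • (- deriv r 0) := by
      rw [← key, smul_smul, ← Real.exp_add]; simp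
    rw [← sub_eq_zero, ← sub_eq_zero.mpr k2, smul_neg]; abel
  have h3 : Filter.Tendsto r Filter.atTop (nhds a) := by
    have e : Filter.Tendsto (fun t : ℝ => a - Real.exp (-t) • deriv r 0) Filter.atTop
        (nhds (a - (0 : ℝ) • deriv r 0)) :=
      tendsto_const_nhds.sub (Real.tendsto_exp_neg_atTop_nhds_zero.smul tendsto_const_nhds)
    rw [zero_smul, sub_zero] at e
    refine e.congr' ?_
    filter_upwards [Filter.eventually_ge_atTop 0] with t ht using (h2 t ht).symm
  have h4 : Filter.Tendsto (fun t => r t - a) Filter.atTop (nhds 0) := by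
    simpa using h3.sub_const a
  refine ⟨h2, h3, ?_, ?_⟩
  · have h5 := h4.neg
    rw [neg_zero] at h5
    refine h5.congr' ?_
    filter_upwards [Filter.eventually_ge_atTop 0] with t ht
    have := h1 t ht
    rw [eq_comm, ← sub_eq_zero, ← this]; abel
  · refine h4.congr' ?_
    filter_upwards [Filter.eventually_ge_atTop 0] with t ht using (hode t ht).symm
end

section
/- Let a ∈ ℝ² and let r : ℝ → ℝ² be twice differentiable with r''(t) = r(t) − a for all t ≥ 0. If a = r(0) + r'(0), then r''(t) = −r'(t) for all t ≥ 0; i.e., after stepping to the instantaneous capture point, the center-of-mass dynamics reduce to the linear system ṙ_CoM'' = −ṙ_CoM, whose eigenvalue is −1. -/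
/-- After stepping to the instantaneous capture point (`a = r 0 + r' 0`),
the LIPM center-of-mass dynamics `r'' = r - a` on `t ≥ 0` reduce to the
linear system `r'' = -r'` (eigenvalue `-1`). -/
theorem stmt3 (a : EuclideanSpace ℝ (Fin 2)) (r : ℝ → EuclideanSpace ℝ (Fin 2))
    (hr : Differentiable ℝ r) (hr' : Differentiable ℝ (deriv r))
    (hode : ∀ t, 0 ≤ t → deriv (deriv r) t = r t - a)
    (hcap : a = r 0 + deriv r 0) :
    ∀ t, 0 ≤ t → deriv (deriv r) t = - deriv r t := by
  intro t ht
  have hd : ∀ s, 0 ≤ s →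
      HasDerivAt (fun x => Real.exp (-x) • (r x + deriv r x - a)) 0 s := by
    intro s hs
    have h1 : HasDerivAt (fun x : ℝ => Real.exp (-x)) (Real.exp (-s) * (-1)) s :=
      (hasDerivAt_neg s).exp
    have h2 : HasDerivAt (fun x => r x + deriv r x - a) (deriv r s + deriv (deriv r) s) s :=
      ((hr s).hasDerivAt.add (hr' s).hasDerivAt).sub_const a
    have h3 := h1.smul h2
    have h4 : Real.exp (-s) • (deriv r s + deriv (deriv r) s)
        + (Real.exp (-s) * (-1)) • (r s + deriv r s - a) = 0 := by
      rw [hode s hs]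
      module
    rw [h4] at h3
    exact h3
  have hc := constant_of_has_deriv_right_zero
    (f := fun x => Real.exp (-x) • (r x + deriv r x - a)) (a := 0) (b := t)
    (fun s hs => (hd s hs.1).continuousAt.continuousWithinAt)
    (fun s hs => (hd s hs.1).hasDerivWithinAt) t ⟨ht, le_rfl⟩
  have h0 : r 0 + deriv r 0 - a = 0 := by rw [← hcap, sub_self]
  simp only [h0, smul_zero, smul_eq_zero, Real.exp_ne_zero, false_or] at hc
  rw [hode t ht, eq_neg_iff_add_eq_zero, ← hc]
  abel
end

section
/- Let a ∈ ℝ² and let r : ℝ → ℝ² be twice differentiable with r''(t) = r(t) − a for all t ≥ 0. If a ≠ r(0) + r'(0) (i.e., the ankle is not placed at the instantaneous capture point), then ‖r(t)‖ → ∞ as t → ∞; in particular the robot is not captured. -/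
theorem lipm_exp_aux {E : Type*} [NormedAddCommGroup E] [NormedSpace ℝ E] (s : ℝ) (w : ℝ → E)
    (hw : ∀ t, 0 ≤ t → HasDerivAt w (s • w t) t) (t : ℝ) (ht : 0 ≤ t) :
    w t = Real.exp (s * t) • w 0 := by
  have hd : ∀ x, 0 ≤ x → HasDerivAt (fun y => Real.exp (-(s * y)) • w y) 0 x := by
    intro x hx
    have h1 : HasDerivAt (fun y => Real.exp (-(s * y))) (Real.exp (-(s * x)) * (-(s * 1))) x :=
      (((hasDerivAt_id x).const_mul s).neg).exp
    have h2 := h1.smul (hw x hx)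
    refine HasDerivAt.congr_deriv h2 ?_
    module
  have h := constant_of_has_deriv_right_zero (a := 0) (b := t)
    (f := fun y => Real.exp (-(s * y)) • w y)
    (fun x hx => (hd x hx.1).continuousAt.continuousWithinAt)
    (fun x hx => (hd x hx.1).hasDerivWithinAt) t ⟨ht, le_rfl⟩
  simp only [mul_zero, neg_zero, Real.exp_zero, one_smul] at h
  rw [← h, smul_smul, ← Real.exp_add]
  simp

/-- If the ankle is NOT placed at the instantaneous capture point
(`a ≠ r 0 + r' 0`), then under the LIPM dynamics `r'' = r - a` on `t ≥ 0`,
the center of mass diverges: `‖r t‖ → ∞` as `t → ∞`; in particular the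
robot is not captured. -/
theorem stmt5 (a : EuclideanSpace ℝ (Fin 2)) (r : ℝ → EuclideanSpace ℝ (Fin 2))
    (hr : Differentiable ℝ r) (hr' : Differentiable ℝ (deriv r))
    (hode : ∀ t, 0 ≤ t → deriv (deriv r) t = r t - a)
    (hne : a ≠ r 0 + deriv r 0) :
    Filter.Tendsto (fun t => ‖r t‖) Filter.atTop Filter.atTop := by
  have h1 : ∀ t, HasDerivAt r (deriv r t) t := fun t => (hr t).hasDerivAt
  have h2 : ∀ t, 0 ≤ t → HasDerivAt (deriv r) (r t - a) t := fun t ht => by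
    rw [← hode t ht]; exact (hr' t).hasDerivAt
  have hu := lipm_exp_aux 1 (fun t => r t - a + deriv r t) (fun t ht => by
    refine HasDerivAt.congr_deriv (((h1 t).sub_const a).add (h2 t ht)) ?_
    module)
  have hv := lipm_exp_aux (-1) (fun t => r t - a - deriv r t) (fun t ht => by
    refine HasDerivAt.congr_deriv (((h1 t).sub_const a).sub (h2 t ht)) ?_
    module)
  set c := r 0 - a + deriv r 0 with hc
  set d := r 0 - a - deriv r 0
  have hc0 : 0 < ‖c‖ := by
    rw [norm_pos_iff]
    intro h
    apply hne
    rw [← sub_eq_zero, ← neg_eq_zero, ← h, hc]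
    abel
  have hlim : Filter.Tendsto (fun t => Real.exp t * (‖c‖ / 2) + (-(‖d‖ / 2) - ‖a‖))
      Filter.atTop Filter.atTop :=
    Filter.tendsto_atTop_add_const_right _ _
      (Real.tendsto_exp_atTop.atTop_mul_const (by positivity))
  refine Filter.tendsto_atTop_mono' _ ?_ hlim
  filter_upwards [Filter.eventually_ge_atTop 0] with t ht
  have hut := hu t ht
  have hvt := hv t ht
  have key : Real.exp (1 * t) • c = (2 : ℝ) • r t - (2 : ℝ) • a - Real.exp (-1 * t) • d := by
    rw [← hut, ← hvt]; module
  have hn := congrArg norm key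
  rw [norm_smul, Real.norm_eq_abs, Real.abs_exp, one_mul] at hn
  have e1 := norm_sub_le ((2 : ℝ) • r t - (2 : ℝ) • a) (Real.exp (-1 * t) • d)
  have e2 := norm_sub_le ((2 : ℝ) • r t) ((2 : ℝ) • a)
  simp only [norm_smul, Real.norm_eq_abs, Real.abs_exp, abs_two] at e1 e2
  have e3 : Real.exp (-1 * t) ≤ 1 := Real.exp_le_one_iff.2 (by linarith)
  have e4 := mul_le_mul_of_nonneg_right e3 (norm_nonneg d)
  linarith
end

section
/- Let a ∈ ℝ² and let r : ℝ → ℝ² be twice differentiable with r''(t) = r(t) − a for all t ≥ 0. Then r is bounded on [0, ∞) if and only if a = r(0) + r'(0). Hence the instantaneous capture point r(0) + r'(0) is the unique one-step capture point for the LIPM with point foot: it is the unique ankle placement under which the resulting motion does not diverge. -/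
/-- A function on `[0, ∞)` with zero derivative is constant there. -/
lemma const_of_deriv_zero {f : ℝ → EuclideanSpace ℝ (Fin 2)}
    (hc : Continuous f) (hd : ∀ t, 0 ≤ t → HasDerivAt f 0 t) (t : ℝ) (ht : 0 ≤ t) :
    f t = f 0 :=
  constant_of_has_deriv_right_zero hc.continuousOn
    (fun x hx => (hd x hx.1).hasDerivWithinAt) t ⟨ht, le_refl t⟩

/-- The explicit solution of the LIPM. -/
lemma lipm_solution (a : EuclideanSpace ℝ (Fin 2)) (r : ℝ → EuclideanSpace ℝ (Fin 2))
    (hr : Differentiable ℝ r) (hr' : Differentiable ℝ (deriv r))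
    (hode : ∀ t, 0 ≤ t → deriv (deriv r) t = r t - a) (t : ℝ) (ht : 0 ≤ t) :
    (2 : ℝ) • (r t - a) = Real.exp t • (r 0 + deriv r 0 - a)
      + Real.exp (-t) • (r 0 - deriv r 0 - a) := by
  have c1 := hr.continuous
  have c2 := hr'.continuous
  have hu := const_of_deriv_zero (f := fun s => Real.exp (-s) • (r s + deriv r s - a))
    (by fun_prop) (fun s hs => by
      have h1 : HasDerivAt (fun s : ℝ => Real.exp (-s)) (-Real.exp (-s)) s := by
        simpa using (hasDerivAt_neg s).exp
      have h2 := (((hr s).hasDerivAt.add (hr' s).hasDerivAt).sub_const a)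
      rw [hode s hs] at h2
      refine (h1.smul h2).congr_deriv ?_
      simp only [Pi.add_apply]
      module) t ht
  have hv := const_of_deriv_zero (f := fun s => Real.exp s • (r s - deriv r s - a))
    (by fun_prop) (fun s hs => by
      have h2 := (((hr s).hasDerivAt.sub (hr' s).hasDerivAt).sub_const a)
      rw [hode s hs] at h2
      refine ((Real.hasDerivAt_exp s).smul h2).congr_deriv ?_
      simp only [Pi.sub_apply]
      module) t ht
  simp only [neg_zero, Real.exp_zero, one_smul] at hu hv
  rw [← hu, ← hv, smul_smul, smul_smul, ← Real.exp_add, ← Real.exp_add]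
  simp only [add_neg_cancel, neg_add_cancel, Real.exp_zero]
  module

/-- For LIPM dynamics `r'' = r - a` on `t ≥ 0`, the trajectory is bounded
on `[0, ∞)` if and only if the ankle `a` equals the instantaneous capture
point `r 0 + r' 0`: the instantaneous capture point is the unique one-step
capture point of the LIPM with point foot. -/
theorem stmt6 (a : EuclideanSpace ℝ (Fin 2)) (r : ℝ → EuclideanSpace ℝ (Fin 2))
    (hr : Differentiable ℝ r) (hr' : Differentiable ℝ (deriv r))
    (hode : ∀ t, 0 ≤ t → deriv (deriv r) t = r t - a) :
    (∃ C : ℝ, ∀ t, 0 ≤ t → ‖r t‖ ≤ C) ↔ a = r 0 + deriv r 0 := by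
  have sol := lipm_solution a r hr hr' hode
  have key : ∀ t : ℝ, 0 ≤ t → ∀ v : EuclideanSpace ℝ (Fin 2), ‖Real.exp (-t) • v‖ ≤ ‖v‖ := by
    intro t ht v
    rw [norm_smul, Real.norm_eq_abs, Real.abs_exp]
    exact mul_le_of_le_one_left (norm_nonneg _) (Real.exp_le_one_iff.2 (by linarith))
  set v := r 0 - deriv r 0 - a with hv
  constructor
  · rintro ⟨C, hC⟩
    by_contra hne
    set u := r 0 + deriv r 0 - a with hu
    have hu0 : 0 < ‖u‖ := norm_pos_iff.2 (fun h => hne (sub_eq_zero.1 h).symm)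
    have hC0 : 0 ≤ C := (norm_nonneg _).trans (hC 0 le_rfl)
    set K := 2 * (C + ‖a‖) + ‖v‖ with hK
    have hK0 : 0 ≤ K := by positivity
    have bd : ∀ t : ℝ, 0 ≤ t → Real.exp t * ‖u‖ ≤ K := by
      intro t ht
      have e : Real.exp t • u = (2 : ℝ) • (r t - a) - Real.exp (-t) • v := by
        rw [sol t ht]; abel
      have h1 : ‖Real.exp t • u‖ = Real.exp t * ‖u‖ := by
        rw [norm_smul, Real.norm_eq_abs, Real.abs_exp]
      have h2 := norm_sub_le ((2 : ℝ) • (r t - a)) (Real.exp (-t) • v)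
      have h3 : ‖(2 : ℝ) • (r t - a)‖ = 2 * ‖r t - a‖ := by
        rw [norm_smul]; norm_num
      have h4 := norm_sub_le (r t) a
      have h5 := hC t ht
      have h6 := key t ht v
      rw [← e] at h2
      linarith
    have h := bd (K / ‖u‖) (by positivity)
    have h2 := mul_le_mul_of_nonneg_right (Real.add_one_le_exp (K / ‖u‖)) hu0.le
    rw [add_mul, div_mul_cancel₀ _ hu0.ne'] at h2
    linarith
  · intro h
    refine ⟨‖v‖ + ‖a‖, fun t ht => ?_⟩
    have h1 := sol t ht
    rw [← h, sub_self, smul_zero, zero_add] at h1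
    have h3 : ‖(2 : ℝ) • (r t - a)‖ = 2 * ‖r t - a‖ := by
      rw [norm_smul]; norm_num
    have h6 := key t ht v
    rw [← h1, h3] at h6
    have h7 := norm_sub_norm_le (r t) a
    have h8 := norm_nonneg (r t - a)
    linarith
end

section
/- Let f : ℝ → ℝ, d ∈ ℝ, N ≥ 1, and τ₁, …, τ_N ∈ ℝ. Define alternating foot positions a₀ = a₁ = 0 and a_{i+1} = a_{i−1} + f(τ_i) for 1 ≤ i ≤ N, and capture point values x₀ = d and x_i = (x_{i−1} − a_i)·exp(τ_i) + a_i for 1 ≤ i ≤ N. Then the N-step capture condition x_N = a_{N+1} holds if and only if d = Σ_{i=1}^{N} exp(−Σ_{j=1}^{i} τ_j) · Σ_{j=1}^{i} (−1)^{i+j} f(τ_j). -/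
/-- N-step capture condition for the 1D normalized LIPM with swing leg
kernel `f`. Alternating foot positions: `a 0 = a 1 = 0`,
`a (i+1) = a (i-1) + f (τ i)` for `1 ≤ i ≤ N`; capture point values:
`x 0 = d`, `x i = (x (i-1) - a i) * exp (τ i) + a i` for `1 ≤ i ≤ N`.
Then the capture condition `x N = a (N+1)` holds iff
`d = ∑_{i=1}^N exp (-∑_{j=1}^i τ j) * ∑_{j=1}^i (-1)^(i+j) * f (τ j)`. -/
theorem stmt11 (f : ℝ → ℝ) (d : ℝ) (N : ℕ) (hN : 1 ≤ N) (τ : ℕ → ℝ)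
    (a x : ℕ → ℝ) (ha0 : a 0 = 0) (ha1 : a 1 = 0)
    (harec : ∀ i, 1 ≤ i → i ≤ N → a (i + 1) = a (i - 1) + f (τ i))
    (hx0 : x 0 = d)
    (hxrec : ∀ i, 1 ≤ i → i ≤ N → x i = (x (i - 1) - a i) * Real.exp (τ i) + a i) :
    x N = a (N + 1) ↔
      d = ∑ i ∈ Finset.Icc 1 N, Real.exp (-(∑ j ∈ Finset.Icc 1 i, τ j)) *
            ∑ j ∈ Finset.Icc 1 i, (-1 : ℝ) ^ (i + j) * f (τ j) := by
  have hs : ∀ i, i ≤ N →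
      ∑ j ∈ Finset.Icc 1 i, (-1 : ℝ) ^ (i + j) * f (τ j) = a (i + 1) - a i := by
    intro i
    induction i with
    | zero => intro _; simp [ha0, ha1]
    | succ k ih =>
      intro hk
      have h1 := ih (by omega)
      have h2 := harec (k + 1) (by omega) hk
      simp only [Nat.add_sub_cancel] at h2
      rw [Finset.sum_Icc_succ_top (by omega)]
      have h3 : ∑ j ∈ Finset.Icc 1 k, (-1 : ℝ) ^ (k + 1 + j) * f (τ j)
          = -∑ j ∈ Finset.Icc 1 k, (-1 : ℝ) ^ (k + j) * f (τ j) := by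
        rw [← Finset.sum_neg_distrib]
        refine Finset.sum_congr rfl fun j _ => ?_
        ring
      have h4 : (-1 : ℝ) ^ (k + 1 + (k + 1)) = 1 := Even.neg_one_pow ⟨k + 1, rfl⟩
      rw [h3, h1, h4, h2]
      ring
  have hy : ∀ n, n ≤ N →
      (x n - a (n + 1)) * Real.exp (-(∑ j ∈ Finset.Icc 1 n, τ j)) =
        d - ∑ i ∈ Finset.Icc 1 n, Real.exp (-(∑ j ∈ Finset.Icc 1 i, τ j)) *
            ∑ j ∈ Finset.Icc 1 i, (-1 : ℝ) ^ (i + j) * f (τ j) := by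
    intro n
    induction n with
    | zero => intro _; simp [ha1, hx0]
    | succ k ih =>
      intro hk
      have h1 := ih (by omega)
      have h2 := hxrec (k + 1) (by omega) hk
      simp only [Nat.add_sub_cancel] at h2
      rw [Finset.sum_Icc_succ_top (by omega) (fun i => Real.exp (-(∑ j ∈ Finset.Icc 1 i, τ j)) *
            ∑ j ∈ Finset.Icc 1 i, (-1 : ℝ) ^ (i + j) * f (τ j)), hs (k + 1) hk, ← sub_sub, ← h1]
      have h5 : Real.exp (-(∑ j ∈ Finset.Icc 1 k, τ j)) =
          Real.exp (τ (k + 1)) * Real.exp (-(∑ j ∈ Finset.Icc 1 (k + 1), τ j)) := by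
        rw [← Real.exp_add, Finset.sum_Icc_succ_top (by omega)]
        congr 1
        ring
      rw [h5, h2]
      ring
  have h := hy N le_rfl
  rw [← sub_eq_zero, ← sub_eq_zero (a := d), ← h]
  simp [Real.exp_ne_zero]
end
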